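/- arXiv:2005.02604 — 4 statements merged into one kernel-verified Lean document; each statement's English description precedes it below -/
import Mathlib

section
/- Let h be a symmetric bilinear form on V with associated symmetric endomorphism H, and let T be a (0,k)-tensor on V. Then for all X_1,…,X_k ∈ V: Σ_{i=1}^k Σ_{a=1}^n ((X_i ∧ H(e_a))T)(X_1,…,e_a,…,X_k) = Σ_{i≠j} (T∘τ_{ij})(X_1,…,H(X_i),…,X_k) − Σ_{i≠j} g(X_i,X_j)·c_{ij}(h⊗T)(X_1,…,X̂_i,…,X̂_j,…,X_k) + k·tr(h)·T(X_1,…,X_k) + (HT)(X_1,…,X_k), where on the left e_a occupies the i-th slot, (A ∧ B) denotes the skew endomorphism (A ∧ B)Z = g(A,Z)B − g(B,Z)A, and in (T∘τ_{ij}) the argument H(X_i) occupies the i-th slot (and the l-th slot holds X_l for l ≠ i). -/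
open scoped RealInnerProductSpace BigOperators
open Finset

noncomputable section

variable {V : Type*} [NormedAddCommGroup V] [InnerProductSpace ℝ V]

/-- The action `(L T)(X₁,…,X_k) = −Σᵢ T(X₁,…,L(Xᵢ),…,X_k)` of a map `L : V → V`
on a `(0,k)`-tensor `T`. -/
def tact {k : ℕ} (L : V → V) (T : (Fin k → V) → ℝ) (X : Fin k → V) : ℝ :=
  -∑ i, T (Function.update X i (L (X i)))

/-- The Kulkarni–Nomizu product of two bilinear forms. -/
def knProd (s₁ s₂ : V → V → ℝ) (X Y Z W : V) : ℝ :=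
  s₁ X Z * s₂ Y W - s₁ X W * s₂ Y Z + s₁ Y W * s₂ X Z - s₁ Y Z * s₂ X W

/-- The inner product `g` as a bilinear form. -/
def gf (X Y : V) : ℝ := ⟪X, Y⟫

/-- The curvature endomorphism `R(X,Y)`, determined by `g(R(X,Y)Z,W) = R(X,Y,Z,W)`,
expressed via the orthonormal basis `e`. -/
def curvOp {n : ℕ} (e : Fin n → V) (R : V → V → V → V → ℝ) (X Y Z : V) : V :=
  ∑ a, R X Y Z (e a) • e a

/-- The curvature term `Ric_R(T)(X₁,…,X_k) = Σᵢ Σⱼ ((R(Xᵢ,eⱼ))T)(X₁,…,eⱼ,…,X_k)`. -/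
def ricTerm {n k : ℕ} (e : Fin n → V) (R : V → V → V → V → ℝ)
    (T : (Fin k → V) → ℝ) (X : Fin k → V) : ℝ :=
  ∑ i : Fin k, ∑ j : Fin n, tact (curvOp e R (X i) (e j)) T (Function.update X i (e j))

/-- The inner product of two `(0,k)`-tensors with respect to the orthonormal basis `e`. -/
def tinner {n k : ℕ} (e : Fin n → V) (S T : (Fin k → V) → ℝ) : ℝ :=
  ∑ I : Fin k → Fin n, S (fun m => e (I m)) * T (fun m => e (I m))

/-- The skew endomorphism `(A ∧ B)Z = g(A,Z)B − g(B,Z)A`. -/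
def wedgeOp (A B Z : V) : V := ⟪A, Z⟫ • B - ⟪B, Z⟫ • A

/-!
Letting the endomorphism `Xᵢ ∧ H eₐ` act on slot `j` of `T(X₁,…,eₐ,…,X_k)` produces two terms, and
the sum over `a` removes `eₐ` from the slots by means of `v = ∑ₐ g(eₐ, v) eₐ`. For `j = i` one is
left with `T(…,H Xᵢ,…) − tr(h) T(X)`. For `j ≠ i` the `Xᵢ`-part of the wedge moves `H eₐ` into slot
`j` and gives `g(Xᵢ, Xⱼ) c_{ij}(h ⊗ T)`, while in the other part `g(H eₐ, Xⱼ) = g(eₐ, H* Xⱼ)` puts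
`H* Xⱼ` into slot `i` and `Xᵢ` into slot `j`; exchanging the names `i` and `j` turns this into the
transposition term.
-/

theorem sum_inner_smul_map {ι 𝕜 E N : Type*} [Fintype ι] [RCLike 𝕜]
    [NormedAddCommGroup E] [InnerProductSpace 𝕜 E] [AddCommGroup N] [Module 𝕜 N]
    (e : OrthonormalBasis ι 𝕜 E) (f : E →ₗ[𝕜] N) (v : E) :
    ∑ a, inner 𝕜 (e a) v • f (e a) = f v := by
  simp only [← map_smul, ← map_sum, e.sum_repr']

section Multilinear

variable {ι κ M : Type*} [Fintype ι] [DecidableEq κ] [AddCommGroup M] [Module ℝ M]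

/-- The contraction `c_{ij}(h ⊗ T)` of a bilinear form with a tensor in the orthonormal basis `e`.
It is evaluated at a full family `X`, whose entries in the slots `i` and `j` are overwritten, in
place of the family with these two entries omitted. -/
def tensorContraction (e : OrthonormalBasis ι ℝ V) (h : V → V → ℝ) (T : (κ → V) → M) (i j : κ)
    (X : κ → V) : M :=
  ∑ a, ∑ b, h (e a) (e b) • T (Function.update (Function.update X i (e a)) j (e b))

theorem tensorContraction_eq_sum (e : OrthonormalBasis ι ℝ V) {H : V → V} {h : V → V → ℝ}
    (hh : ∀ X Y, h X Y = ⟪H X, Y⟫) (T : MultilinearMap ℝ (fun _ : κ => V) M) (i j : κ)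
    (X : κ → V) :
    tensorContraction e h T i j X =
      ∑ a, T (Function.update (Function.update X i (e a)) j (H (e a))) := by
  refine Finset.sum_congr rfl fun a _ => ?_
  simp only [hh, real_inner_comm _ (H (e a))]
  exact sum_inner_smul_map e (T.toLinearMap (Function.update X i (e a)) j) (H (e a))

theorem map_update_wedgeOp (T : MultilinearMap ℝ (fun _ : κ => V) M) (X : κ → V) (i : κ)
    (A B Z : V) :
    T (Function.update X i (wedgeOp A B Z)) =
      ⟪A, Z⟫ • T (Function.update X i B) - ⟪B, Z⟫ • T (Function.update X i A) := by
  rw [wedgeOp, T.map_update_sub, T.map_update_smul, T.map_update_smul]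

theorem sum_map_update_wedgeOp_self (e : OrthonormalBasis ι ℝ V) (H : V →ₗ[ℝ] V)
    (T : MultilinearMap ℝ (fun _ : κ => V) M) (X : κ → V) (i : κ) :
    ∑ a, T (Function.update X i (wedgeOp (X i) (H (e a)) (e a))) =
      T (Function.update X i (H (X i))) - (∑ a, ⟪H (e a), e a⟫) • T X := by
  have hexpand : ∑ a, ⟪X i, e a⟫ • T (Function.update X i (H (e a))) =
      T (Function.update X i (H (X i))) := by
    simp only [real_inner_comm _ (X i)]
    exact sum_inner_smul_map e (T.toLinearMap X i ∘ₗ H) (X i)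
  simp only [map_update_wedgeOp, Function.update_eq_self, Finset.sum_sub_distrib, hexpand,
    Finset.sum_smul]

theorem sum_map_update_wedgeOp_of_ne (e : OrthonormalBasis ι ℝ V) {H H' : V → V}
    (hadj : ∀ X Y, ⟪H X, Y⟫ = ⟪X, H' Y⟫) {h : V → V → ℝ} (hh : ∀ X Y, h X Y = ⟪H X, Y⟫)
    (T : MultilinearMap ℝ (fun _ : κ => V) M) (X : κ → V) {i j : κ} (hij : i ≠ j) :
    ∑ a, T (Function.update (Function.update X i (e a)) j (wedgeOp (X i) (H (e a)) (X j))) =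
      ⟪X i, X j⟫ • tensorContraction e h T i j X
        - T (Function.update (Function.update X j (X i)) i (H' (X j))) := by
  have hexpand : ∑ a, ⟪H (e a), X j⟫ • T (Function.update (Function.update X i (e a)) j (X i)) =
      T (Function.update (Function.update X j (X i)) i (H' (X j))) := by
    simp only [hadj, Function.update_comm hij]
    exact sum_inner_smul_map e (T.toLinearMap (Function.update X j (X i)) i) (H' (X j))
  simp only [map_update_wedgeOp, Finset.sum_sub_distrib, hexpand, ← Finset.smul_sum,
    tensorContraction_eq_sum e hh]

end Multilinear

section Action

variable {ι : Type*} [Fintype ι] {k : ℕ}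

theorem tact_update {W : Type*} (L : W → W) (T : (Fin k → W) → ℝ) (X : Fin k → W) (i : Fin k)
    (v : W) :
    tact L T (Function.update X i v) =
      -T (Function.update X i (L v)) -
        ∑ j, if i = j then 0 else T (Function.update (Function.update X i v) j (L (X j))) := by
  have hslot (j : Fin k) :
      T (Function.update (Function.update X i v) j (L (Function.update X i v j))) =
        (if i = j then T (Function.update X i (L v)) else 0) +
          if i = j then 0 else T (Function.update (Function.update X i v) j (L (X j))) := by
    obtain rfl | hij := eq_or_ne i j
    · simp
    · simp [hij, hij.symm]
  simp only [tact, hslot, Finset.sum_add_distrib, Finset.sum_ite_eq, Finset.mem_univ, if_true]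
  ring

theorem sum_tact_wedgeOp_update (e : OrthonormalBasis ι ℝ V) (H : V →ₗ[ℝ] V) {H' : V → V}
    (hadj : ∀ X Y, ⟪H X, Y⟫ = ⟪X, H' Y⟫) {h : V → V → ℝ} (hh : ∀ X Y, h X Y = ⟪H X, Y⟫)
    (T : MultilinearMap ℝ (fun _ : Fin k => V) ℝ) (X : Fin k → V) (i : Fin k) :
    ∑ a, tact (wedgeOp (X i) (H (e a))) T (Function.update X i (e a)) =
      (∑ j, if i = j then 0 else T (Function.update (Function.update X j (X i)) i (H' (X j))))
      - (∑ j, if i = j then 0 else ⟪X i, X j⟫ * tensorContraction e h T i j X)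
      + (∑ a, h (e a) (e a)) * T X
      - T (Function.update X i (H (X i))) := by
  have hoff : ∑ a, ∑ j, (if i = j then 0 else
        T (Function.update (Function.update X i (e a)) j (wedgeOp (X i) (H (e a)) (X j)))) =
      (∑ j, if i = j then 0 else ⟪X i, X j⟫ * tensorContraction e h T i j X) -
        ∑ j, if i = j then 0 else
          T (Function.update (Function.update X j (X i)) i (H' (X j))) := by
    rw [Finset.sum_comm, ← Finset.sum_sub_distrib]
    refine Finset.sum_congr rfl fun j _ => ?_
    obtain hij | hij := eq_or_ne i j
    · simp [hij]
    · simpa [hij] using sum_map_update_wedgeOp_of_ne e hadj hh T X hij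
  simp only [tact_update, Finset.sum_sub_distrib, Finset.sum_neg_distrib, hoff,
    sum_map_update_wedgeOp_self, smul_eq_mul, hh]
  ring

theorem stmt1_general (e : OrthonormalBasis ι ℝ V) (H : V →ₗ[ℝ] V) (H' : V → V)
    (hadj : ∀ X Y, ⟪H X, Y⟫ = ⟪X, H' Y⟫) (h : V → V → ℝ) (hh : ∀ X Y, h X Y = ⟪H X, Y⟫)
    (T : MultilinearMap ℝ (fun _ : Fin k => V) ℝ) (X : Fin k → V) :
    (∑ i, ∑ a, tact (wedgeOp (X i) (H (e a))) T (Function.update X i (e a))) =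
      (∑ i, ∑ j, if i = j then 0 else
        T (Function.update (Function.update X i (X j)) j (H' (X i))))
      - (∑ i, ∑ j, if i = j then 0 else ⟪X i, X j⟫ * tensorContraction e h T i j X)
      + k * (∑ a, h (e a) (e a)) * T X
      + tact H T X := by
  have hrename : (∑ i, ∑ j, if i = j then 0 else
        T (Function.update (Function.update X j (X i)) i (H' (X j)))) =
      ∑ i, ∑ j, if i = j then 0 else
        T (Function.update (Function.update X i (X j)) j (H' (X i))) := by
    rw [Finset.sum_comm]
    simp only [eq_comm]
  simp only [sum_tact_wedgeOp_update e H hadj hh, Finset.sum_sub_distrib, Finset.sum_add_distrib,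
    hrename, Finset.sum_const, Finset.card_univ, Fintype.card_fin, nsmul_eq_mul]
  rw [tact]
  ring

end Action

/-- the first half of the computation in the proof of Proposition 3.2. -/
theorem stmt1 {n k : ℕ} (e : OrthonormalBasis (Fin n) ℝ V)
    (H : V →ₗ[ℝ] V) (hHsym : ∀ X Y : V, ⟪H X, Y⟫ = ⟪X, H Y⟫)
    (h : V → V → ℝ) (hh : ∀ X Y : V, h X Y = ⟪H X, Y⟫)
    (T : MultilinearMap ℝ (fun _ : Fin k => V) ℝ) :
    ∀ X : Fin k → V,
      (∑ i : Fin k, ∑ a : Fin n,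
          tact (wedgeOp (X i) (H (e a))) ⇑T (Function.update X i (e a))) =
        (∑ i : Fin k, ∑ j : Fin k, if i = j then 0 else
            T (Function.update (Function.update X i (X j)) j (H (X i))))
        - (∑ i : Fin k, ∑ j : Fin k, if i = j then 0 else
            ⟪X i, X j⟫ *
              ∑ a : Fin n, ∑ b : Fin n, h (e a) (e b) *
                T (Function.update (Function.update X i (e a)) j (e b)))
        + (k : ℝ) * (∑ a : Fin n, h (e a) (e a)) * T X
        + tact ⇑H ⇑T X :=
  stmt1_general e H H hHsym h hh T
end
end

section
/- Let h be a symmetric bilinear form on V with associated symmetric endomorphism H and let 1 ≤ p ≤ n. Every p-form ω on V satisfies Ric_{h⧆g}(ω) = −(n−2p)·Hω + p·tr(h)·ω. -/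
/-!
For symmetric endomorphisms `H`, `K` with associated forms `h`, `k`, the curvature endomorphism of
`h ⧆ k` is `R(X, Y) = HX ∧ KY + KX ∧ HY`. Everything therefore reduces to the contraction
`∑ⱼ ((Xᵢ ∧ K eⱼ) ω)(X₁, …, eⱼ, …, X_p) = tr(K) ω(X) + (Kω)(X)`, with `eⱼ` in the `i`-th slot. When
`Xᵢ ∧ K eⱼ` acts on the `i`-th slot itself, the sum over `j` is an ordinary trace; when it acts on
another slot, the term `∑ⱼ ω(…, eⱼ, …, K eⱼ, …)` vanishes because `K` is symmetric and `ω`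
alternating. The theorem is the case `K = id`, where `tr(K) = n` and `Kω = -p ω`.
-/

open scoped RealInnerProductSpace BigOperators
open Finset

noncomputable section

variable {V : Type*} [NormedAddCommGroup V] [InnerProductSpace ℝ V]

section Contractions

variable {ι N : Type*} [Fintype ι] [AddCommGroup N] [Module ℝ N]

lemma sum_inner_smul_apply (e : OrthonormalBasis ι ℝ V) (f : V →ₗ[ℝ] N) (x : V) :
    ∑ j, ⟪e j, x⟫ • f (e j) = f x := by
  simp_rw [← map_smul, ← map_sum, e.sum_repr']

lemma sum_apply_map_eq_sum_map_apply (e : OrthonormalBasis ι ℝ V) {K : V →ₗ[ℝ] V}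
    (hK : K.IsSymmetric) (B : V →ₗ[ℝ] V →ₗ[ℝ] N) :
    ∑ j, B (e j) (K (e j)) = ∑ j, B (K (e j)) (e j) := by
  have swap (a j : ι) : ⟪e a, K (e j)⟫ = ⟪e j, K (e a)⟫ := by rw [← hK, real_inner_comm]
  calc ∑ j, B (e j) (K (e j))
      = ∑ j, ∑ a, ⟪e a, K (e j)⟫ • B (e j) (e a) := by
        simp_rw [sum_inner_smul_apply e (B _)]
    _ = ∑ a, ∑ j, ⟪e j, K (e a)⟫ • B.flip (e a) (e j) := by
        rw [sum_comm]
        exact sum_congr rfl fun a _ ↦ sum_congr rfl fun j _ ↦ by rw [swap, B.flip_apply]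
    _ = ∑ a, B (K (e a)) (e a) := by
        simp_rw [sum_inner_smul_apply e (B.flip _), LinearMap.flip_apply]

lemma sum_apply_map_eq_zero_of_isAlt (e : OrthonormalBasis ι ℝ V) {K : V →ₗ[ℝ] V}
    (hK : K.IsSymmetric) {B : V →ₗ[ℝ] V →ₗ[ℝ] N} (hB : B.IsAlt) :
    ∑ j, B (e j) (K (e j)) = 0 := by
  have := IsAddTorsionFree.of_isTorsionFree ℝ N
  have skew : ∑ j, B (e j) (K (e j)) = -∑ j, B (e j) (K (e j)) := by
    conv_lhs => rw [sum_apply_map_eq_sum_map_apply e hK]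
    simp_rw [← sum_neg_distrib, hB.neg]
  exact self_eq_neg.mp skew

lemma sum_wedgeOp_map_self (e : OrthonormalBasis ι ℝ V) (K : V →ₗ[ℝ] V) (x : V) :
    ∑ j, wedgeOp x (K (e j)) (e j) = K x - K.trace ℝ V • x := by
  simp_rw [wedgeOp, sum_sub_distrib, ← sum_smul, K.trace_eq_sum_inner e, real_inner_comm (e _),
    sum_inner_smul_apply e K]

lemma sum_apply_wedgeOp_map_of_isAlt (e : OrthonormalBasis ι ℝ V) {K : V →ₗ[ℝ] V}
    (hK : K.IsSymmetric) {B : V →ₗ[ℝ] V →ₗ[ℝ] N} (hB : B.IsAlt) (x z : V) :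
    ∑ j, B (e j) (wedgeOp x (K (e j)) z) = B x (K z) := by
  have expand : ∑ j, ⟪e j, K z⟫ • B (e j) x = B (K z) x :=
    sum_inner_smul_apply e (B.flip x) (K z)
  simp_rw [wedgeOp, map_sub, map_smul, sum_sub_distrib, ← smul_sum,
    sum_apply_map_eq_zero_of_isAlt e hK hB, hK (e _) z, expand, smul_zero, zero_sub, hB.neg]

end Contractions

section TwoSlots

variable {R ι N : Type*} [CommSemiring R] [DecidableEq ι] [AddCommMonoid N] [Module R N]
  {M : ι → Type*} [∀ i, AddCommMonoid (M i)] [∀ i, Module R (M i)]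

/-- The bilinear map `(a, b) ↦ f (m₁, …, a, …, b, …)` obtained from a multilinear map `f` by freeing
two distinct slots `i` and `j` of the argument `m`. It turns a contraction of an alternating map
over one slot, with an endomorphism acting on another, into a contraction of an alternating form. -/
def updateBilin (f : MultilinearMap R M N) (m : ∀ i, M i) {i j : ι} (hij : i ≠ j) :
    M i →ₗ[R] M j →ₗ[R] N :=
  LinearMap.mk₂ R (fun a b ↦ f (Function.update (Function.update m i a) j b))
    (fun a a' b ↦ by simp only [Function.update_comm hij, f.map_update_add])
    (fun c a b ↦ by simp only [Function.update_comm hij, f.map_update_smul])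
    (fun a b b' ↦ f.map_update_add _ j b b')
    (fun c a b ↦ f.map_update_smul _ j c b)

lemma updateBilin_apply (f : MultilinearMap R M N) (m : ∀ i, M i) {i j : ι} (hij : i ≠ j)
    (a : M i) (b : M j) :
    updateBilin f m hij a b = f (Function.update (Function.update m i a) j b) := rfl

lemma isAlt_updateBilin {E : Type*} [AddCommMonoid E] [Module R E] (ω : E [⋀^ι]→ₗ[R] N)
    (m : ι → E) {i j : ι} (hij : i ≠ j) :
    (updateBilin ω.toMultilinearMap m hij).IsAlt :=
  fun a ↦ ω.map_update_update m hij a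

end TwoSlots

section SlotContractions

variable {ι κ N : Type*} [Fintype ι] [DecidableEq κ] [AddCommGroup N] [Module ℝ N]

lemma sum_update_wedgeOp_map_self (e : OrthonormalBasis ι ℝ V) (K : V →ₗ[ℝ] V)
    (f : MultilinearMap ℝ (fun _ : κ ↦ V) N) (X : κ → V) (i : κ) :
    ∑ j, f (Function.update X i (wedgeOp (X i) (K (e j)) (e j))) =
      f (Function.update X i (K (X i))) - K.trace ℝ V • f X := by
  rw [← f.map_update_sum, sum_wedgeOp_map_self, f.map_update_sub, f.map_update_smul,
    Function.update_eq_self]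

lemma sum_update_update_wedgeOp_map (e : OrthonormalBasis ι ℝ V) {K : V →ₗ[ℝ] V}
    (hK : K.IsSymmetric) (ω : V [⋀^κ]→ₗ[ℝ] N) (X : κ → V) {i k : κ} (hik : i ≠ k) :
    ∑ j, ω (Function.update (Function.update X i (e j)) k (wedgeOp (X i) (K (e j)) (X k))) =
      ω (Function.update X k (K (X k))) := by
  simpa only [updateBilin_apply, AlternatingMap.coe_multilinearMap, Function.update_eq_self] using
    sum_apply_wedgeOp_map_of_isAlt e hK (isAlt_updateBilin ω X hik) (X i) (X k)

end SlotContractions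

lemma tact_id {E : Type*} {k : ℕ} (T : (Fin k → E) → ℝ) (X : Fin k → E) :
    tact id T X = -(k * T X) := by
  simp [tact]

lemma tact_add {E : Type*} [AddCommMonoid E] [Module ℝ E] {k : ℕ} (L L' : E → E)
    (T : MultilinearMap ℝ (fun _ : Fin k ↦ E) ℝ) (X : Fin k → E) :
    tact (L + L') T X = tact L T X + tact L' T X := by
  simp_rw [tact, Pi.add_apply, T.map_update_add, sum_add_distrib, neg_add]

lemma curvOp_knProd {n : ℕ} (e : OrthonormalBasis (Fin n) ℝ V) (H K : V → V) (X Y : V) :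
    curvOp e (knProd (fun v w ↦ ⟪H v, w⟫) (fun v w ↦ ⟪K v, w⟫)) X Y =
      wedgeOp (H X) (K Y) + wedgeOp (K X) (H Y) := by
  funext Z
  rw [Pi.add_apply, ← e.sum_repr' (wedgeOp (H X) (K Y) Z + wedgeOp (K X) (H Y) Z)]
  refine sum_congr rfl fun a _ ↦ ?_
  simp only [knProd, wedgeOp, inner_add_right, inner_sub_right, real_inner_smul_right,
    real_inner_comm (e a)]
  congr 1
  ring

lemma sum_tact_wedgeOp_map {ι : Type*} [Fintype ι] {p : ℕ} (e : OrthonormalBasis ι ℝ V)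
    {K : V →ₗ[ℝ] V} (hK : K.IsSymmetric) (ω : V [⋀^Fin p]→ₗ[ℝ] ℝ) (X : Fin p → V) (i : Fin p) :
    ∑ j, tact (wedgeOp (X i) (K (e j))) ω (Function.update X i (e j)) =
      K.trace ℝ V * ω X + tact K ω X := by
  have slot (k : Fin p) :
      ∑ j, ω (Function.update (Function.update X i (e j)) k
        (wedgeOp (X i) (K (e j)) (Function.update X i (e j) k))) =
      ω (Function.update X k (K (X k))) - if k = i then K.trace ℝ V * ω X else 0 := by
    rcases eq_or_ne k i with rfl | hki
    · simpa using sum_update_wedgeOp_map_self e K ω.toMultilinearMap X k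
    · simpa [hki] using sum_update_update_wedgeOp_map e hK ω X hki.symm
  simp_rw [tact, sum_neg_distrib]
  rw [sum_comm]
  simp_rw [slot, sum_sub_distrib, sum_ite_eq', mem_univ, if_true]
  ring

lemma ricTerm_knProd {n p : ℕ} (e : OrthonormalBasis (Fin n) ℝ V) {H K : V →ₗ[ℝ] V}
    (hH : H.IsSymmetric) (hK : K.IsSymmetric) (ω : V [⋀^Fin p]→ₗ[ℝ] ℝ) (X : Fin p → V) :
    ricTerm e (knProd (fun v w ↦ ⟪H v, w⟫) (fun v w ↦ ⟪K v, w⟫)) ω X =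
      -K.trace ℝ V * tact H ω X - H.trace ℝ V * tact K ω X +
        ∑ i, (tact K ω (Function.update X i (H (X i))) +
          tact H ω (Function.update X i (K (X i)))) := by
  have contract {L : V →ₗ[ℝ] V} (hL : L.IsSymmetric) (i : Fin p) (x : V) :
      ∑ j, tact (wedgeOp x (L (e j))) ω (Function.update X i (e j)) =
        L.trace ℝ V * ω (Function.update X i x) + tact L ω (Function.update X i x) := by
    simpa using sum_tact_wedgeOp_map e hL ω (Function.update X i x) i
  have split (L L' : V → V) (Y : Fin p → V) : tact (L + L') ω Y = tact L ω Y + tact L' ω Y :=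
    tact_add L L' ω.toMultilinearMap Y
  simp_rw [ricTerm, curvOp_knProd, split, sum_add_distrib, contract hK, contract hH,
    sum_add_distrib, ← mul_sum]
  simp only [tact]
  ring

/-- Proposition 3.3(2), first identity: the weighted curvature term on
`p`-forms. -/
theorem stmt6 {n p : ℕ} (hp : 1 ≤ p) (hpn : p ≤ n) (e : OrthonormalBasis (Fin n) ℝ V)
    (H : V →ₗ[ℝ] V) (hHsym : ∀ X Y : V, ⟪H X, Y⟫ = ⟪X, H Y⟫)
    (h : V → V → ℝ) (hh : ∀ X Y : V, h X Y = ⟪H X, Y⟫)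
    (ω : AlternatingMap ℝ V ℝ (Fin p)) :
    ∀ X : Fin p → V,
      ricTerm ⇑e (knProd h gf) ⇑ω X =
        -((n : ℝ) - 2 * p) * tact ⇑H ⇑ω X
        + (p : ℝ) * (∑ a : Fin n, h (e a) (e a)) * ω X := by
  intro X
  obtain rfl : h = fun v w ↦ ⟪H v, w⟫ := funext₂ hh
  have trace_H : H.trace ℝ V = ∑ a, ⟪H (e a), e a⟫ := by
    simp_rw [H.trace_eq_sum_inner e, real_inner_comm]
  have trace_id : (LinearMap.id : V →ₗ[ℝ] V).trace ℝ V = n := by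
    simp [LinearMap.trace_eq_sum_inner _ e]
  have sum_tact_id : ∑ i, tact id ω (Function.update X i (H (X i))) = p * tact H ω X := by
    simp_rw [tact_id, tact, sum_neg_distrib, ← mul_sum, mul_neg]
  calc ricTerm e (knProd (fun v w ↦ ⟪H v, w⟫) fun v w ↦ ⟪v, w⟫) ω X
      = -n * tact H ω X - H.trace ℝ V * tact id ω X +
          ∑ i, (tact id ω (Function.update X i (H (X i))) + tact H ω X) := by
        simpa [trace_id] using ricTerm_knProd e hHsym LinearMap.IsSymmetric.id ω X
    _ = -((n : ℝ) - 2 * p) * tact H ω X + p * (∑ a, ⟪H (e a), e a⟫) * ω X := by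
        rw [sum_add_distrib, sum_tact_id, tact_id, trace_H, sum_const, card_univ, Fintype.card_fin,
          nsmul_eq_mul]
        ring
end
end

section
/- Let Rm be a (0,4)-tensor on V with Rm(X,Y,Z,W) = −Rm(Y,X,Z,W) = Rm(Z,W,X,Y), and let h be a symmetric bilinear form on V. Then for all X_1, X_2, X_3, X_4 ∈ V: Σ_{i≠j} h(X_i,X_j)·c_{ij}(g⊗Rm)(X_1,…,X̂_i,…,X̂_j,…,X_4) = 2·(h ⧆ Ric)(X_1,X_2,X_3,X_4), where Ric(X,Z) = Σ_{a=1}^n Rm(X,e_a,Z,e_a) is the Ricci contraction of Rm, the sum runs over ordered pairs 1 ≤ i,j ≤ 4 with i ≠ j, and hats denote omitted arguments. -/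
/-!
Along an orthonormal family `c_{ij}(g ⊗ Rm)` puts the same vector into slots `i` and `j` and sums.
With slots numbered from `1`, the contractions over `{1,2}` and `{3,4}` vanish by skew-symmetry,
those over `{1,3}` and `{2,4}` are `Ric`, and those over `{1,4}` and `{2,3}` are `-Ric`. Each
unordered pair of slots occurs twice by symmetry of `h` and of the contraction, which accounts for
the factor `2`.
-/

open scoped RealInnerProductSpace BigOperators
open Finset

noncomputable section

variable {V : Type*} [NormedAddCommGroup V] [InnerProductSpace ℝ V]

lemma sum_sum_ite_eq_two_nsmul_sum_Ioi {κ M : Type*} [Fintype κ] [LinearOrder κ]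
    [LocallyFiniteOrderTop κ] [LocallyFiniteOrderBot κ] [AddCommMonoid M] {f : κ → κ → M}
    (hf : ∀ i j, f i j = f j i) :
    (∑ i, ∑ j, if i = j then 0 else f i j) = 2 • ∑ i, ∑ j ∈ Ioi i, f i j :=
  calc (∑ i, ∑ j, if i = j then 0 else f i j)
    _ = ∑ i, ∑ j ∈ {i}ᶜ, f j i := by
      refine sum_congr rfl fun i _ => ?_
      rw [← sum_compl_add_sum {i}, sum_singleton, if_pos rfl, add_zero]
      refine sum_congr rfl fun j hj => ?_
      rw [if_neg (by simpa [eq_comm] using hj), hf]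
    _ = ∑ i, ∑ j ∈ Ioi i, (f j i + f i j) := (sum_sum_Ioi_add_eq_sum_sum_off_diag f).symm
    _ = 2 • ∑ i, ∑ j ∈ Ioi i, f i j := by
      simp only [smul_sum, two_nsmul, hf]

lemma sum_fin_four_sum_Ioi {M : Type*} [AddCommMonoid M] (f : Fin 4 → Fin 4 → M) :
    ∑ i, ∑ j ∈ Ioi i, f i j = f 0 1 + f 0 2 + f 0 3 + f 1 2 + f 1 3 + f 2 3 := by
  have Ioi_zero : Ioi (0 : Fin 4) = {1, 2, 3} := rfl
  have Ioi_one : Ioi (1 : Fin 4) = {2, 3} := rfl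
  have Ioi_two : Ioi (2 : Fin 4) = {3} := rfl
  have Ioi_three : Ioi (3 : Fin 4) = ∅ := rfl
  simp [Fin.sum_univ_four, Ioi_zero, Ioi_one, Ioi_two, Ioi_three, add_assoc]

lemma sum_sum_inner_mul_of_orthonormal {ι : Type*} [Fintype ι] {e : ι → V} (he : Orthonormal ℝ e)
    (f : ι → ι → ℝ) : ∑ a, ∑ b, ⟪e a, e b⟫ * f a b = ∑ a, f a a := by
  classical
  simp [orthonormal_iff_ite.mp he]

/-- The symmetries `R(x,y,z,w) = -R(y,x,z,w) = R(z,w,x,y)` of a curvature tensor, without the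
Bianchi identity, for an arbitrary function `R` of four arguments. -/
structure HasCurvatureSymmetries {α A : Type*} [Neg A] (R : (Fin 4 → α) → A) : Prop where
  swap_left : ∀ x y z w, R ![x, y, z, w] = -R ![y, x, z, w]
  swap_pairs : ∀ x y z w, R ![x, y, z, w] = R ![z, w, x, y]

namespace HasCurvatureSymmetries

variable {α A : Type*} {R : (Fin 4 → α) → A}

lemma swap_right [Neg A] (hR : HasCurvatureSymmetries R) (x y z w : α) :
    R ![x, y, z, w] = -R ![x, y, w, z] := by
  rw [hR.swap_pairs, hR.swap_left, hR.swap_pairs]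

lemma swap_left_right [InvolutiveNeg A] (hR : HasCurvatureSymmetries R) (x y z w : α) :
    R ![x, y, z, w] = R ![y, x, w, z] := by
  rw [hR.swap_left, hR.swap_right, neg_neg]

lemma self_left [AddGroup A] [IsAddTorsionFree A] (hR : HasCurvatureSymmetries R) (x z w : α) :
    R ![x, x, z, w] = 0 :=
  self_eq_neg.mp (hR.swap_left x x z w)

lemma self_right [AddGroup A] [IsAddTorsionFree A] (hR : HasCurvatureSymmetries R) (x y z : α) :
    R ![x, y, z, z] = 0 :=
  self_eq_neg.mp (hR.swap_right x y z z)

end HasCurvatureSymmetries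

section Contraction

variable {ι α A : Type*} [Fintype ι]

/-- The contraction `∑ₐ T(…, eₐ, …, eₐ, …)` of slots `i` and `j` of `T` along the family `e`,
which is `c_{ij}(g ⊗ T)` when `e` is an orthonormal basis. Instead of omitting arguments, it takes
a full list `X` and overwrites the entries in slots `i` and `j`. -/
def slotContraction {κ : Type*} [DecidableEq κ] [AddCommMonoid A] (e : ι → α) (i j : κ)
    (T : (κ → α) → A) (X : κ → α) : A :=
  ∑ a, T (Function.update (Function.update X i (e a)) j (e a))

/-- The Ricci contraction `Ric(x,z) = ∑ₐ R(x,eₐ,z,eₐ)` of `R` along the family `e`. -/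
def ricciContraction [AddCommMonoid A] (e : ι → α) (R : (Fin 4 → α) → A) (x z : α) : A :=
  ∑ a, R ![x, e a, z, e a]

lemma slotContraction_comm {κ : Type*} [DecidableEq κ] [AddCommMonoid A] (e : ι → α) (i j : κ)
    (T : (κ → α) → A) (X : κ → α) : slotContraction e i j T X = slotContraction e j i T X := by
  rcases eq_or_ne i j with rfl | hij
  · rfl
  · simp only [slotContraction, Function.update_comm hij]

lemma slotContraction_eq_sum_vec [AddCommMonoid A] (e : ι → α) (i j : Fin 4) (T : (Fin 4 → α) → A)
    (X : Fin 4 → α) :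
    slotContraction e i j T X =
      ∑ a, let Y := Function.update (Function.update X i (e a)) j (e a)
        T ![Y 0, Y 1, Y 2, Y 3] :=
  sum_congr rfl fun _ _ => congrArg T (FinVec.etaExpand_eq _).symm

lemma slotContraction_one_three [AddCommMonoid A] (e : ι → α) (R : (Fin 4 → α) → A)
    (X : Fin 4 → α) : slotContraction e 1 3 R X = ricciContraction e R (X 0) (X 2) :=
  slotContraction_eq_sum_vec e 1 3 R X

namespace HasCurvatureSymmetries

section AddCommGroup

variable [AddCommGroup A] {R : (Fin 4 → α) → A}

lemma slotContraction_zero_one [IsAddTorsionFree A] (hR : HasCurvatureSymmetries R)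
    (e : ι → α) (X : Fin 4 → α) : slotContraction e 0 1 R X = 0 :=
  (slotContraction_eq_sum_vec e 0 1 R X).trans <| sum_eq_zero fun _ _ => hR.self_left _ _ _

lemma slotContraction_two_three [IsAddTorsionFree A] (hR : HasCurvatureSymmetries R)
    (e : ι → α) (X : Fin 4 → α) : slotContraction e 2 3 R X = 0 :=
  (slotContraction_eq_sum_vec e 2 3 R X).trans <| sum_eq_zero fun _ _ => hR.self_right _ _ _

lemma slotContraction_zero_two (hR : HasCurvatureSymmetries R) (e : ι → α) (X : Fin 4 → α) :
    slotContraction e 0 2 R X = ricciContraction e R (X 1) (X 3) :=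
  (slotContraction_eq_sum_vec e 0 2 R X).trans <|
    sum_congr rfl fun _ _ => hR.swap_left_right _ _ _ _

lemma slotContraction_zero_three (hR : HasCurvatureSymmetries R) (e : ι → α) (X : Fin 4 → α) :
    slotContraction e 0 3 R X = -ricciContraction e R (X 1) (X 2) := by
  rw [slotContraction_eq_sum_vec, ricciContraction, ← sum_neg_distrib]
  exact sum_congr rfl fun _ _ => hR.swap_left _ _ _ _

lemma slotContraction_one_two (hR : HasCurvatureSymmetries R) (e : ι → α) (X : Fin 4 → α) :
    slotContraction e 1 2 R X = -ricciContraction e R (X 0) (X 3) := by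
  rw [slotContraction_eq_sum_vec, ricciContraction, ← sum_neg_distrib]
  exact sum_congr rfl fun _ _ => hR.swap_right _ _ _ _

end AddCommGroup

lemma sum_Ioi_mul_slotContraction {R : (Fin 4 → α) → ℝ} (hR : HasCurvatureSymmetries R)
    (e : ι → α) (h : α → α → ℝ) (X : Fin 4 → α) :
    ∑ i, ∑ j ∈ Ioi i, h (X i) (X j) * slotContraction e i j R X =
      knProd h (ricciContraction e R) (X 0) (X 1) (X 2) (X 3) := by
  rw [sum_fin_four_sum_Ioi, hR.slotContraction_zero_one, hR.slotContraction_zero_two,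
    hR.slotContraction_zero_three, hR.slotContraction_one_two, slotContraction_one_three,
    hR.slotContraction_two_three, knProd]
  ring

end HasCurvatureSymmetries

end Contraction

theorem stmt10_general {ι : Type*} [Fintype ι] {e : ι → V} (he : Orthonormal ℝ e)
    {h : V → V → ℝ} (hsym : ∀ x y, h x y = h y x)
    {R : (Fin 4 → V) → ℝ} (hR : HasCurvatureSymmetries R) (X : Fin 4 → V) :
    (∑ i : Fin 4, ∑ j : Fin 4, if i = j then 0 else
        h (X i) (X j) *
          ∑ a, ∑ b, ⟪e a, e b⟫ * R (Function.update (Function.update X i (e a)) j (e b))) =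
      2 * knProd h (ricciContraction e R) (X 0) (X 1) (X 2) (X 3) := by
  have hf (i j : Fin 4) : h (X i) (X j) * slotContraction e i j R X =
      h (X j) (X i) * slotContraction e j i R X := by
    rw [hsym, slotContraction_comm]
  simp only [sum_sum_inner_mul_of_orthonormal he]
  calc (∑ i, ∑ j, if i = j then 0 else h (X i) (X j) * slotContraction e i j R X)
    _ = 2 • ∑ i, ∑ j ∈ Ioi i, h (X i) (X j) * slotContraction e i j R X :=
      sum_sum_ite_eq_two_nsmul_sum_Ioi hf
    _ = 2 * knProd h (ricciContraction e R) (X 0) (X 1) (X 2) (X 3) := by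
      rw [hR.sum_Ioi_mul_slotContraction, nsmul_eq_mul, Nat.cast_ofNat]

/-- `Σ_{i≠j} h(Xᵢ,Xⱼ)·c_{ij}(g⊗Rm) = 2 (h ⧆ Ric)`. -/
theorem stmt10 {n : ℕ} (e : OrthonormalBasis (Fin n) ℝ V)
    (h : V →ₗ[ℝ] V →ₗ[ℝ] ℝ) (hsym : ∀ X Y : V, h X Y = h Y X)
    (Rm : MultilinearMap ℝ (fun _ : Fin 4 => V) ℝ)
    (hA : ∀ X Y Z W : V, Rm ![X, Y, Z, W] = -Rm ![Y, X, Z, W])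
    (hP : ∀ X Y Z W : V, Rm ![X, Y, Z, W] = Rm ![Z, W, X, Y])
    (ricc : V → V → ℝ) (hric : ∀ X Z : V, ricc X Z = ∑ a : Fin n, Rm ![X, e a, Z, e a]) :
    ∀ X : Fin 4 → V,
      (∑ i : Fin 4, ∑ j : Fin 4, if i = j then 0 else
          h (X i) (X j) *
            ∑ a : Fin n, ∑ b : Fin n, ⟪e a, e b⟫ *
              Rm (Function.update (Function.update X i (e a)) j (e b))) =
        2 * knProd (fun x y => h x y) ricc (X 0) (X 1) (X 2) (X 3) := by
  obtain rfl : ricc = ricciContraction e Rm := funext₂ hric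
  exact stmt10_general e.orthonormal hsym ⟨hA, hP⟩
end
end

section
/- Let h be a symmetric bilinear form on V with associated symmetric endomorphism H. Every algebraic curvature tensor Rm on V satisfies Ric_{h⧆g}(Rm) = −2·(h ⧆ Ric) − 2·(g ⧆ c) − (n−2)·H(Rm) + 4·tr(h)·Rm, where Ric(X,Z) = Σ_a Rm(X,e_a,Z,e_a) is the Ricci contraction of Rm and c(X,Z) = Σ_a Rm(X, H(e_a), Z, e_a) = c_{24}(h⊗Rm)(X,Z). -/
/-!
The curvature endomorphism of `h ⧆ g` is
`R(X,Y)Z = h(X,Z) Y - g(Y,Z) H X + g(X,Z) H Y - h(Y,Z) X`. Inserting it into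
`Ric_{h ⧆ g}(T) = ∑ᵢ ∑ₘ ∑ⱼ …`, where `i` is the slot receiving `eⱼ` and `m` the slot acted upon,
the pairs `i = m` produce the multiples of `H(T)` and `tr(h) T`. A pair `i ≠ m` produces
`h(Xᵢ,Xₘ)` times the trace of `T` over the slots `i, m`, `g(Xᵢ,Xₘ)` times the same trace weighted
by `H`, and two terms in which `Xᵢ` and `Xₘ` are interchanged and `H` is applied to one of them.

If `T` is an algebraic curvature tensor, then its traces weighted by a self-adjoint `L` vanish over
the slots `{1,2}` and `{3,4}`, and over the other pairs they are, up to sign, the Ricci contraction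
weighted by `L`; taking `L = id` and `L = H` gives the two Kulkarni–Nomizu products. The interchange
terms cancel, because the Bianchi identity says that the three transpositions moving a given slot
add up to zero on a curvature tensor.
-/

open scoped RealInnerProductSpace BigOperators
open Finset

noncomputable section

variable {V : Type*} [NormedAddCommGroup V] [InnerProductSpace ℝ V]

lemma sum_inner_smul_map_s11 {ι M : Type*} [Fintype ι] [AddCommGroup M] [Module ℝ M]
    (e : OrthonormalBasis ι ℝ V) (L : V →ₗ[ℝ] M) (X : V) :
    ∑ j, ⟪e j, X⟫ • L (e j) = L X := by
  conv_rhs => rw [← e.sum_repr' X]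
  simp only [map_sum, map_smul]

section SlotTrace

variable {ι κ : Type*} [Fintype ι] [DecidableEq κ]

/-- The trace `∑ⱼ T(…, eⱼ, …, L eⱼ, …)` of a tensor `T` over its slots `i` and `m`, weighted by a
map `L` that is applied in slot `m`; the arguments `X i` and `X m` are discarded. -/
def slotTrace (e : ι → V) (L : V → V) (T : (κ → V) → ℝ) (X : κ → V) (i m : κ) : ℝ :=
  ∑ j, T (Function.update (Function.update X i (e j)) m (L (e j)))

lemma sum_inner_mul_map_update (e : OrthonormalBasis ι ℝ V)
    (T : MultilinearMap ℝ (fun _ : κ => V) ℝ) (L : V →ₗ[ℝ] V) (X : κ → V) (i : κ) (Y : V) :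
    ∑ j, ⟪e j, Y⟫ * T (Function.update X i (L (e j))) = T (Function.update X i (L Y)) :=
  sum_inner_smul_map_s11 e (T.toLinearMap X i ∘ₗ L) Y

lemma slotTrace_comm (e : OrthonormalBasis ι ℝ V) {L : V →ₗ[ℝ] V} (hL : L.IsSymmetric)
    (T : MultilinearMap ℝ (fun _ : κ => V) ℝ) (X : κ → V) (i m : κ) :
    slotTrace e L T X i m = slotTrace e L T X m i := by
  obtain rfl | him := eq_or_ne i m
  · rfl
  have expand : ∀ p q, slotTrace e L T X p q =
      ∑ j, ∑ a, ⟪e a, L (e j)⟫ * T (Function.update (Function.update X p (e j)) q (e a)) :=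
    fun p q => sum_congr rfl fun j _ =>
      (sum_inner_mul_map_update e T LinearMap.id (Function.update X p (e j)) q (L (e j))).symm
  rw [expand, expand, sum_comm]
  refine sum_congr rfl fun a _ => sum_congr rfl fun j _ => ?_
  rw [← hL, real_inner_comm, Function.update_comm him]

end SlotTrace

section CurvatureTerm

variable {n : ℕ} (e : OrthonormalBasis (Fin n) ℝ V)

lemma curvOp_knProd_gf (H : V → V) (X Y Z : V) :
    curvOp e (knProd (fun A B => ⟪H A, B⟫) gf) X Y Z =
      ⟪H X, Z⟫ • Y - ⟪Y, Z⟫ • H X + ⟪X, Z⟫ • H Y - ⟪H Y, Z⟫ • X := by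
  rw [← e.sum_repr' (⟪H X, Z⟫ • Y - ⟪Y, Z⟫ • H X + ⟪X, Z⟫ • H Y - ⟪H Y, Z⟫ • X)]
  refine sum_congr rfl fun a _ => congrArg (· • e a) ?_
  simp only [knProd, gf, inner_add_right, inner_sub_right, inner_smul_right,
    real_inner_comm (e a)]
  ring

variable {k : ℕ} (T : MultilinearMap ℝ (fun _ : Fin k => V) ℝ) (X : Fin k → V)

lemma sum_map_update_curvOp_self (H : V →ₗ[ℝ] V) (i : Fin k) :
    ∑ j, T (Function.update (Function.update X i (e j)) i
        (curvOp e (knProd (fun A B => ⟪H A, B⟫) gf) (X i) (e j) (e j))) =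
      -((n : ℝ) - 2) * T (Function.update X i (H (X i))) - (∑ a, ⟪H (e a), e a⟫) * T X := by
  have trace_HX : ∑ j, ⟪H (X i), e j⟫ * T (Function.update X i (e j)) =
      T (Function.update X i (H (X i))) := by
    simpa only [real_inner_comm (e _), LinearMap.id_apply] using
      sum_inner_mul_map_update e T LinearMap.id X i (H (X i))
  have trace_X : ∑ j, ⟪X i, e j⟫ * T (Function.update X i (H (e j))) =
      T (Function.update X i (H (X i))) := by
    simpa only [real_inner_comm (e _)] using sum_inner_mul_map_update e T H X i (X i)
  have trace_g : ∑ j, ⟪e j, e j⟫ = (n : ℝ) := by simp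
  simp only [curvOp_knProd_gf, Function.update_idem, T.map_update_add, T.map_update_sub,
    T.map_update_smul, smul_eq_mul, sum_add_distrib, sum_sub_distrib, ← sum_mul, trace_HX, trace_X,
    trace_g, Function.update_eq_self]
  ring

lemma sum_map_update_curvOp_of_ne {H : V →ₗ[ℝ] V} (hH : H.IsSymmetric) {i m : Fin k}
    (him : i ≠ m) :
    ∑ j, T (Function.update (Function.update X i (e j)) m
        (curvOp e (knProd (fun A B => ⟪H A, B⟫) gf) (X i) (e j) (X m))) =
      ⟪H (X i), X m⟫ * slotTrace e id T X i m + gf (X i) (X m) * slotTrace e H T X i m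
        - T (Function.update X i (H (X i)) ∘ Equiv.swap i m)
        - T (Function.update X m (H (X m)) ∘ Equiv.swap m i) := by
  have trace_Xm : ∑ j, ⟪e j, X m⟫ * T (Function.update (Function.update X i (e j)) m (H (X i))) =
      T (Function.update X i (H (X i)) ∘ Equiv.swap i m) := by
    simpa [Function.update_comm him, Equiv.comp_swap_eq_update, him.symm] using
      sum_inner_mul_map_update e T LinearMap.id (Function.update X m (H (X i))) i (X m)
  have trace_HXm : ∑ j, ⟪H (e j), X m⟫ * T (Function.update (Function.update X i (e j)) m (X i)) =
      T (Function.update X m (H (X m)) ∘ Equiv.swap m i) := by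
    simpa [Function.update_comm him, Equiv.comp_swap_eq_update, him, hH (e _)] using
      sum_inner_mul_map_update e T LinearMap.id (Function.update X m (X i)) i (H (X m))
  simp only [curvOp_knProd_gf, T.map_update_add, T.map_update_sub, T.map_update_smul, smul_eq_mul,
    sum_add_distrib, sum_sub_distrib, ← mul_sum, trace_Xm, trace_HXm, slotTrace, gf, id]
  ring

lemma sum_tact_curvOp {H : V →ₗ[ℝ] V} (hH : H.IsSymmetric) (i : Fin k) :
    ∑ j, tact (curvOp e (knProd (fun A B => ⟪H A, B⟫) gf) (X i) (e j)) T
        (Function.update X i (e j)) =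
      ((n : ℝ) - 2) * T (Function.update X i (H (X i))) + (∑ a, ⟪H (e a), e a⟫) * T X
        - ∑ m with m ≠ i, (⟪H (X i), X m⟫ * slotTrace e id T X i m
          + gf (X i) (X m) * slotTrace e H T X i m
          - T (Function.update X i (H (X i)) ∘ Equiv.swap i m)
          - T (Function.update X m (H (X m)) ∘ Equiv.swap m i)) := by
  simp only [tact]
  rw [sum_neg_distrib, sum_comm, ← add_sum_erase _ _ (mem_univ i), ← filter_ne', neg_add,
    sub_eq_add_neg _ (∑ m with m ≠ i, _)]
  congr 1
  · simp only [Function.update_self, sum_map_update_curvOp_self]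
    ring
  · refine congrArg Neg.neg (sum_congr rfl fun m hm => ?_)
    have hmi : m ≠ i := (mem_filter_univ m).1 hm
    simp only [Function.update_of_ne hmi]
    exact sum_map_update_curvOp_of_ne e T X hH hmi.symm

theorem ricTerm_knProd_gf {H : V →ₗ[ℝ] V} (hH : H.IsSymmetric) :
    ricTerm e (knProd (fun A B => ⟪H A, B⟫) gf) T X =
      -∑ i, ∑ m with m ≠ i, ⟪H (X i), X m⟫ * slotTrace e id T X i m
        - ∑ i, ∑ m with m ≠ i, gf (X i) (X m) * slotTrace e H T X i m
        + 2 * ∑ i, ∑ m with m ≠ i, T (Function.update X i (H (X i)) ∘ Equiv.swap i m)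
        - ((n : ℝ) - 2) * tact H T X + k * (∑ a, ⟪H (e a), e a⟫) * T X := by
  have interchange : ∑ i, ∑ m with m ≠ i, T (Function.update X m (H (X m)) ∘ Equiv.swap m i) =
      ∑ i, ∑ m with m ≠ i, T (Function.update X i (H (X i)) ∘ Equiv.swap i m) :=
    sum_comm' fun _ _ => by simp [ne_comm]
  simp only [ricTerm, sum_tact_curvOp e T X hH, sum_add_distrib, sum_sub_distrib, interchange,
    ← mul_sum, sum_const, card_univ, Fintype.card_fin, nsmul_eq_mul]
  simp only [tact]
  ring

end CurvatureTerm

section Vec4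

variable {E : Type*} (A B C D Z : E)

@[simp] lemma update_vec4_zero : Function.update ![A, B, C, D] 0 Z = ![Z, B, C, D] := by
  funext i; fin_cases i <;> rfl

@[simp] lemma update_vec4_one : Function.update ![A, B, C, D] 1 Z = ![A, Z, C, D] := by
  funext i; fin_cases i <;> rfl

@[simp] lemma update_vec4_two : Function.update ![A, B, C, D] 2 Z = ![A, B, Z, D] := by
  funext i; fin_cases i <;> rfl

@[simp] lemma update_vec4_three : Function.update ![A, B, C, D] 3 Z = ![A, B, C, Z] := by
  funext i; fin_cases i <;> rfl

end Vec4

/-- The symmetries of an algebraic curvature tensor `R`: antisymmetry in the first two slots,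
symmetry under exchange of the two pairs of slots, and the first Bianchi identity. Multilinearity
is not part of this predicate. -/
structure HasCurvatureSymm {E G : Type*} [AddCommGroup G] (R : (Fin 4 → E) → G) : Prop where
  skew_left : ∀ X Y Z W, R ![X, Y, Z, W] = -R ![Y, X, Z, W]
  pair_symm : ∀ X Y Z W, R ![X, Y, Z, W] = R ![Z, W, X, Y]
  bianchi : ∀ X Y Z W, R ![X, Y, Z, W] + R ![Y, Z, X, W] + R ![Z, X, Y, W] = 0

/-- The Ricci contraction `(X, Z) ↦ ∑ₐ R(X, L eₐ, Z, eₐ)` weighted by a map `L`; it is the Ricci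
tensor of `R` for `L = id` and the contraction `c` for `L = H`. -/
def weightedRicci {ι : Type*} [Fintype ι] (e : ι → V) (L : V → V) (R : (Fin 4 → V) → ℝ)
    (X Z : V) : ℝ :=
  ∑ a, R ![X, L (e a), Z, e a]

lemma slotTrace_one_three {ι : Type*} [Fintype ι] {e : OrthonormalBasis ι ℝ V} {L : V →ₗ[ℝ] V}
    {R : MultilinearMap ℝ (fun _ : Fin 4 => V) ℝ} (hL : L.IsSymmetric) (X Y Z W : V) :
    slotTrace e L R ![X, Y, Z, W] 1 3 = weightedRicci e L R X Z := by
  rw [slotTrace_comm e hL R]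
  simp only [slotTrace, weightedRicci, update_vec4_one, update_vec4_three]

namespace HasCurvatureSymm

section Transpositions

variable {E G : Type*} [AddCommGroup G] {R : (Fin 4 → E) → G}

lemma skew_right (hR : HasCurvatureSymm R) (X Y Z W : E) :
    R ![X, Y, Z, W] = -R ![X, Y, W, Z] := by
  rw [hR.pair_symm, hR.skew_left, hR.pair_symm]

lemma sum_swap_slot_zero (hR : HasCurvatureSymm R) (X Y Z W : E) :
    R ![Y, X, Z, W] + R ![Z, Y, X, W] + R ![W, Y, Z, X] = 0 := by
  rw [hR.skew_left Y X, hR.skew_left Z Y, hR.pair_symm W Y, hR.skew_right Z X, ← neg_add,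
    ← neg_add, hR.bianchi, neg_zero]

lemma sum_swap_slot_one (hR : HasCurvatureSymm R) (X Y Z W : E) :
    R ![Y, X, Z, W] + R ![X, Z, Y, W] + R ![X, W, Z, Y] = 0 := by
  rw [hR.skew_left Y, hR.skew_left X Z, hR.skew_left X W, ← neg_add, ← neg_add,
    hR.sum_swap_slot_zero, neg_zero]

lemma sum_swap_slot_two (hR : HasCurvatureSymm R) (X Y Z W : E) :
    R ![Z, Y, X, W] + R ![X, Z, Y, W] + R ![X, Y, W, Z] = 0 := by
  rw [hR.pair_symm Z Y, hR.pair_symm X Z, hR.pair_symm X Y, ← hR.sum_swap_slot_zero Z W X Y]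
  abel

lemma sum_swap_slot_three (hR : HasCurvatureSymm R) (X Y Z W : E) :
    R ![W, Y, Z, X] + R ![X, W, Z, Y] + R ![X, Y, W, Z] = 0 := by
  rw [hR.pair_symm W Y, hR.pair_symm X W, hR.pair_symm X Y, ← hR.sum_swap_slot_one Z W X Y]
  abel

theorem sum_comp_swap_eq_zero (hR : HasCurvatureSymm R) (X : Fin 4 → E) (i : Fin 4) :
    ∑ m with m ≠ i, R (X ∘ Equiv.swap i m) = 0 := by
  obtain ⟨A, B, C, D, rfl⟩ : ∃ A B C D, X = ![A, B, C, D] :=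
    ⟨X 0, X 1, X 2, X 3, (FinVec.etaExpand_eq X).symm⟩
  simp only [sum_filter, Fin.sum_univ_four, Equiv.comp_swap_eq_update]
  fin_cases i
  · simpa using hR.sum_swap_slot_zero A B C D
  · simpa using hR.sum_swap_slot_one A B C D
  · simpa using hR.sum_swap_slot_two A B C D
  · simpa using hR.sum_swap_slot_three A B C D

end Transpositions

section Traces

variable {ι : Type*} [Fintype ι] {e : OrthonormalBasis ι ℝ V} {L : V →ₗ[ℝ] V}
  {R : MultilinearMap ℝ (fun _ : Fin 4 => V) ℝ}

lemma slotTrace_zero_two (hR : HasCurvatureSymm R) (hL : L.IsSymmetric) (X Y Z W : V) :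
    slotTrace e L R ![X, Y, Z, W] 0 2 = weightedRicci e L R Y W := by
  rw [← slotTrace_one_three hL Y X W Z]
  simp only [slotTrace, update_vec4_zero, update_vec4_one, update_vec4_two, update_vec4_three]
  exact sum_congr rfl fun j _ => by rw [hR.skew_left, hR.skew_right, neg_neg]

lemma slotTrace_zero_three (hR : HasCurvatureSymm R) (hL : L.IsSymmetric) (X Y Z W : V) :
    slotTrace e L R ![X, Y, Z, W] 0 3 = -weightedRicci e L R Y Z := by
  rw [← slotTrace_one_three hL Y X Z W]
  simp only [slotTrace, update_vec4_zero, update_vec4_one, update_vec4_three, ← sum_neg_distrib]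
  exact sum_congr rfl fun j _ => hR.skew_left ..

lemma slotTrace_one_two (hR : HasCurvatureSymm R) (hL : L.IsSymmetric) (X Y Z W : V) :
    slotTrace e L R ![X, Y, Z, W] 1 2 = -weightedRicci e L R X W := by
  rw [← slotTrace_one_three hL X Y W Z]
  simp only [slotTrace, update_vec4_one, update_vec4_two, update_vec4_three, ← sum_neg_distrib]
  exact sum_congr rfl fun j _ => hR.skew_right ..

lemma slotTrace_zero_one (hR : HasCurvatureSymm R) (hL : L.IsSymmetric) (X Y Z W : V) :
    slotTrace e L R ![X, Y, Z, W] 0 1 = 0 := by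
  rw [← self_eq_neg]
  conv_rhs => rw [slotTrace_comm e hL R]
  simp only [slotTrace, update_vec4_zero, update_vec4_one, ← sum_neg_distrib]
  exact sum_congr rfl fun j _ => hR.skew_left ..

lemma slotTrace_two_three (hR : HasCurvatureSymm R) (hL : L.IsSymmetric) (X Y Z W : V) :
    slotTrace e L R ![X, Y, Z, W] 2 3 = 0 := by
  rw [← hR.slotTrace_zero_one (e := e) hL Z W X Y]
  simp only [slotTrace, update_vec4_zero, update_vec4_one, update_vec4_two, update_vec4_three]
  exact sum_congr rfl fun j _ => hR.pair_symm ..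

theorem sum_mul_slotTrace (hR : HasCurvatureSymm R) (hL : L.IsSymmetric) {b : V → V → ℝ}
    (hb : ∀ X Y, b X Y = b Y X) (X : Fin 4 → V) :
    ∑ i, ∑ m with m ≠ i, b (X i) (X m) * slotTrace e L R X i m =
      2 * knProd b (weightedRicci e L R) (X 0) (X 1) (X 2) (X 3) := by
  obtain ⟨A, B, C, D, rfl⟩ : ∃ A B C D, X = ![A, B, C, D] :=
    ⟨X 0, X 1, X 2, X 3, (FinVec.etaExpand_eq X).symm⟩
  simp only [sum_filter, Fin.sum_univ_four, ne_eq, Fin.reduceEq, not_true_eq_false,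
    not_false_eq_true, if_true, if_false, Matrix.cons_val]
  have comm := slotTrace_comm e hL R ![A, B, C, D]
  rw [comm 1 0, comm 2 0, comm 3 0, comm 2 1, comm 3 1, comm 3 2, hR.slotTrace_zero_one hL,
    hR.slotTrace_zero_two hL, hR.slotTrace_zero_three hL, hR.slotTrace_one_two hL,
    slotTrace_one_three hL, hR.slotTrace_two_three hL, hb C A, hb D A, hb C B, hb D B, knProd]
  ring

end Traces

end HasCurvatureSymm

/-- Proposition 3.3(3): the weighted curvature term on algebraic curvature
tensors. -/
theorem stmt11 {n : ℕ} (e : OrthonormalBasis (Fin n) ℝ V)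
    (H : V →ₗ[ℝ] V) (hHsym : ∀ X Y : V, ⟪H X, Y⟫ = ⟪X, H Y⟫)
    (h : V → V → ℝ) (hh : ∀ X Y : V, h X Y = ⟪H X, Y⟫)
    (Rm : MultilinearMap ℝ (fun _ : Fin 4 => V) ℝ)
    (hA : ∀ X Y Z W : V, Rm ![X, Y, Z, W] = -Rm ![Y, X, Z, W])
    (hP : ∀ X Y Z W : V, Rm ![X, Y, Z, W] = Rm ![Z, W, X, Y])
    (hB : ∀ X Y Z W : V,
      Rm ![X, Y, Z, W] + Rm ![Y, Z, X, W] + Rm ![Z, X, Y, W] = 0)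
    (ricc : V → V → ℝ) (hric : ∀ X Z : V, ricc X Z = ∑ a : Fin n, Rm ![X, e a, Z, e a])
    (c : V → V → ℝ) (hc : ∀ X Z : V, c X Z = ∑ a : Fin n, Rm ![X, H (e a), Z, e a]) :
    ∀ X₁ X₂ X₃ X₄ : V,
      ricTerm ⇑e (knProd h gf) ⇑Rm ![X₁, X₂, X₃, X₄] =
        -2 * knProd h ricc X₁ X₂ X₃ X₄
        - 2 * knProd gf c X₁ X₂ X₃ X₄
        - ((n : ℝ) - 2) * tact ⇑H ⇑Rm ![X₁, X₂, X₃, X₄]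
        + 4 * (∑ a : Fin n, h (e a) (e a)) * Rm ![X₁, X₂, X₃, X₄] := by
  intro X₁ X₂ X₃ X₄
  have hR : HasCurvatureSymm Rm := ⟨hA, hP, hB⟩
  obtain rfl : h = fun X Y => ⟪H X, Y⟫ := funext₂ hh
  obtain rfl : ricc = weightedRicci e id Rm := funext₂ hric
  obtain rfl : c = weightedRicci e H Rm := funext₂ hc
  have hform : ∀ X Y, ⟪H X, Y⟫ = ⟪H Y, X⟫ := fun X Y => by rw [hHsym, real_inner_comm]
  let X := ![X₁, X₂, X₃, X₄]
  have ricci_part : ∑ i, ∑ m with m ≠ i, ⟪H (X i), X m⟫ * slotTrace e id Rm X i m =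
      2 * knProd (fun A B => ⟪H A, B⟫) (weightedRicci e id Rm) X₁ X₂ X₃ X₄ :=
    hR.sum_mul_slotTrace .id hform X
  have c_part : ∑ i, ∑ m with m ≠ i, gf (X i) (X m) * slotTrace e H Rm X i m =
      2 * knProd gf (weightedRicci e H Rm) X₁ X₂ X₃ X₄ :=
    hR.sum_mul_slotTrace hHsym (fun A B => real_inner_comm B A) X
  have interchange_part :
      ∑ i, ∑ m with m ≠ i, Rm (Function.update X i (H (X i)) ∘ Equiv.swap i m) = 0 :=
    sum_eq_zero fun i _ => hR.sum_comp_swap_eq_zero _ i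
  rw [ricTerm_knProd_gf e Rm X hHsym, ricci_part, c_part, interchange_part]
  push_cast
  ring
end
end
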